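/- arXiv:2312.07864 — 2 statements merged into one kernel-verified Lean document; each statement's English description precedes it below -/
import Mathlib

section
/- Let Φ ∈ ℂ^{L×K} and U ∈ ℂ^{K×r} with U^H U = I_r, and suppose U^H Φ^H Φ U is invertible. Set A₂ = U (U^H Φ^H Φ U)⁻¹ U^H Φ^H. Let S ∈ ℂ^{r×r}, put R_x = U S U^H, let R_w ∈ ℂ^{L×L}, let c₁, c₂ be real numbers, and define R_y = Φ R_x Φ^H + c₁ R_w + c₂ I_L. Then A₂ Φ U = U, and Re trace(R_x) − 2 Re trace(A₂ Φ R_x) + Re trace(A₂ R_y A₂^H) = c₁ · Re trace(A₂ R_w A₂^H) + c₂ · Re trace((U^H Φ^H Φ U)⁻¹). -/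
open Matrix

/-!
`A₂` inverts `Φ` on the range of `U`, so it reproduces every signal correlation `U S Uᴴ`: the three
signal terms of the mean squared error cancel and only the filtered noise remains. The same
inversion property, conjugated, collapses `A₂ A₂ᴴ` to `U (Uᴴ Φᴴ Φ U)⁻¹ Uᴴ`, which gives the
contribution of the white part of the noise.
-/

section Distortionless

variable {R l k r : Type*} [Fintype l] [Fintype k]

theorem conjTranspose_mul_mul_eq_of_mul_mul_eq [NonUnitalSemiring R] [StarRing R]
    {A : Matrix k l R} {Φ : Matrix l k R} {U : Matrix k r R} (hA : A * Φ * U = U) :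
    Uᴴ * Φᴴ * Aᴴ = Uᴴ := by
  simpa only [conjTranspose_mul, Matrix.mul_assoc] using congrArg conjTranspose hA

variable [Fintype r]

theorem mul_signal_mul_conjTranspose_of_mul_mul_eq [NonUnitalSemiring R] [StarRing R]
    {A : Matrix k l R} {Φ : Matrix l k R} {U : Matrix k r R} (hA : A * Φ * U = U)
    (S : Matrix r r R) :
    A * (Φ * (U * S * Uᴴ) * Φᴴ) * Aᴴ = U * S * Uᴴ :=
  calc
    A * (Φ * (U * S * Uᴴ) * Φᴴ) * Aᴴ = A * Φ * U * S * (Uᴴ * Φᴴ * Aᴴ) := by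
      simp only [Matrix.mul_assoc]
    _ = U * S * Uᴴ := by rw [hA, conjTranspose_mul_mul_eq_of_mul_mul_eq hA]

theorem trace_error_eq_trace_noise_of_mul_mul_eq [Ring R] [StarRing R]
    {A : Matrix k l R} {Φ : Matrix l k R} {U : Matrix k r R} (hA : A * Φ * U = U)
    (S : Matrix r r R) (N : Matrix l l R) :
    (U * S * Uᴴ).trace - 2 * (A * Φ * (U * S * Uᴴ)).trace
        + (A * (Φ * (U * S * Uᴴ) * Φᴴ + N) * Aᴴ).trace
      = (A * N * Aᴴ).trace := by
  have hsignal : A * Φ * (U * S * Uᴴ) = U * S * Uᴴ := by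
    simp only [← Matrix.mul_assoc, hA]
  rw [hsignal, Matrix.mul_add, Matrix.add_mul, trace_add,
    mul_signal_mul_conjTranspose_of_mul_mul_eq hA]
  noncomm_ring

end Distortionless

section RSLS

variable {R l k r : Type*} [CommRing R] [StarRing R] [Fintype l] [Fintype k] [Fintype r]
  [DecidableEq r] {Φ : Matrix l k R} {U : Matrix k r R}

/-- The reduced-subspace least-squares filter `A₂`, which estimates a channel lying in the range of
`U` from its observation through `Φ`. The matrix inverse is `0` when the
determinant of `Uᴴ Φᴴ Φ U` is not a unit. -/
noncomputable def rslsFilter (Φ : Matrix l k R) (U : Matrix k r R) : Matrix k l R :=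
  U * (Uᴴ * Φᴴ * Φ * U)⁻¹ * Uᴴ * Φᴴ

theorem rslsFilter_mul_mul (hinv : IsUnit (Uᴴ * Φᴴ * Φ * U).det) :
    rslsFilter Φ U * Φ * U = U :=
  calc
    rslsFilter Φ U * Φ * U = U * ((Uᴴ * Φᴴ * Φ * U)⁻¹ * (Uᴴ * Φᴴ * Φ * U)) := by
      simp only [rslsFilter, Matrix.mul_assoc]
    _ = U := by rw [nonsing_inv_mul _ hinv, Matrix.mul_one]

theorem rslsFilter_mul_conjTranspose (hinv : IsUnit (Uᴴ * Φᴴ * Φ * U).det) :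
    rslsFilter Φ U * (rslsFilter Φ U)ᴴ = U * (Uᴴ * Φᴴ * Φ * U)⁻¹ * Uᴴ := by
  have hA : rslsFilter Φ U * Φ * U = U := rslsFilter_mul_mul hinv
  calc
    rslsFilter Φ U * (rslsFilter Φ U)ᴴ
        = U * (Uᴴ * Φᴴ * Φ * U)⁻¹ * (Uᴴ * Φᴴ * (rslsFilter Φ U)ᴴ) := by
      simp only [rslsFilter, Matrix.mul_assoc]
    _ = U * (Uᴴ * Φᴴ * Φ * U)⁻¹ * Uᴴ := by
      rw [conjTranspose_mul_mul_eq_of_mul_mul_eq hA]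

theorem trace_rslsFilter_mul_conjTranspose (hU : Uᴴ * U = 1)
    (hinv : IsUnit (Uᴴ * Φᴴ * Φ * U).det) :
    (rslsFilter Φ U * (rslsFilter Φ U)ᴴ).trace = ((Uᴴ * Φᴴ * Φ * U)⁻¹).trace := by
  rw [rslsFilter_mul_conjTranspose hinv, trace_mul_cycle, hU, Matrix.one_mul]

theorem rsls_mse_simplification_general [DecidableEq l] (hU : Uᴴ * U = 1)
    (hinv : IsUnit (Uᴴ * Φᴴ * Φ * U).det)
    {A₂ : Matrix k l R} (hA₂ : A₂ = rslsFilter Φ U)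
    {S : Matrix r r R} {Rx : Matrix k k R} (hRx : Rx = U * S * Uᴴ)
    {Rw : Matrix l l R} {c₁ c₂ : R}
    {Ry : Matrix l l R} (hRy : Ry = Φ * Rx * Φᴴ + c₁ • Rw + c₂ • (1 : Matrix l l R)) :
    A₂ * Φ * U = U
    ∧ Rx.trace - 2 * (A₂ * Φ * Rx).trace + (A₂ * Ry * A₂ᴴ).trace
        = c₁ * (A₂ * Rw * A₂ᴴ).trace + c₂ * ((Uᴴ * Φᴴ * Φ * U)⁻¹).trace := by
  subst hA₂ hRx hRy
  have hA := rslsFilter_mul_mul hinv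
  refine ⟨hA, ?_⟩
  rw [add_assoc (Φ * _ * Φᴴ), trace_error_eq_trace_noise_of_mul_mul_eq hA,
    ← trace_rslsFilter_mul_conjTranspose hU hinv]
  simp only [Matrix.mul_add, Matrix.add_mul, Matrix.mul_smul, Matrix.smul_mul, Matrix.mul_one,
    trace_add, trace_smul, smul_eq_mul]

end RSLS

/-- Simplification of the RS-LS channel-estimation MSE (eq. (33) of the paper):
with `A₂ = U(UᴴΦᴴΦU)⁻¹UᴴΦᴴ`, `R_x = U S Uᴴ` and
`R_y = Φ R_x Φᴴ + c₁ R_w + c₂ I`, one has `A₂ Φ U = U` and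
`Re tr R_x − 2 Re tr(A₂ Φ R_x) + Re tr(A₂ R_y A₂ᴴ)
  = c₁ Re tr(A₂ R_w A₂ᴴ) + c₂ Re tr((UᴴΦᴴΦU)⁻¹)`. -/
theorem rsls_mse_simplification {L K r : ℕ}
    (Φ : Matrix (Fin L) (Fin K) ℂ) (U : Matrix (Fin K) (Fin r) ℂ)
    (hU : Uᴴ * U = 1)
    (hinv : IsUnit (Uᴴ * Φᴴ * Φ * U).det)
    (A₂ : Matrix (Fin K) (Fin L) ℂ)
    (hA₂ : A₂ = U * (Uᴴ * Φᴴ * Φ * U)⁻¹ * Uᴴ * Φᴴ)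
    (S : Matrix (Fin r) (Fin r) ℂ)
    (Rx : Matrix (Fin K) (Fin K) ℂ) (hRx : Rx = U * S * Uᴴ)
    (Rw : Matrix (Fin L) (Fin L) ℂ) (c₁ c₂ : ℝ)
    (Ry : Matrix (Fin L) (Fin L) ℂ)
    (hRy : Ry = Φ * Rx * Φᴴ + (c₁ : ℂ) • Rw + (c₂ : ℂ) • (1 : Matrix (Fin L) (Fin L) ℂ)) :
    A₂ * Φ * U = U
    ∧ (Rx.trace).re - 2 * ((A₂ * Φ * Rx).trace).re + ((A₂ * Ry * A₂ᴴ).trace).re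
        = c₁ * ((A₂ * Rw * A₂ᴴ).trace).re + c₂ * (((Uᴴ * Φᴴ * Φ * U)⁻¹).trace).re := by
  obtain ⟨hA, hmse⟩ := rsls_mse_simplification_general hU hinv hA₂ hRx hRy
  exact ⟨hA, by simpa using congrArg Complex.re hmse⟩
end

section
/- Let R_c, R_q ∈ ℂ^{M×M} be Hermitian positive semidefinite, let Λ ∈ ℂ^{τ×τ}, and let c₁ ≥ 0 be real. Then the function f : ℂ^{τ×M} → ℝ defined by f(Φ) = Re trace(Λ Φ R_c Φ^H Λ^H) + c₁ · Re trace(Λ ((Φ R_q Φ^H) ⊙ I_τ) Λ^H) − 2 Re trace(Λ Φ R_c) is convex on ℂ^{τ×M} regarded as a real vector space. -/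
open Matrix
open scoped ComplexOrder

/-!
In the Loewner order, `Φ ↦ Φ R Φᴴ` is convex for positive semidefinite `R`, because for `a + b = 1`
its convexity gap is `a b (Φ - Ψ) R (Φ - Ψ)ᴴ`. Both quadratic terms of the MSE arise from it by
positive linear maps, namely `X ↦ Re tr(Λ X Λᴴ)` and, by the Schur product theorem, `X ↦ X ⊙ T` with
`T` positive semidefinite. The remaining term is linear.
-/

section PositiveLinearMaps

variable {R E β γ : Type*} [Semiring R] [PartialOrder R] [AddCommMonoid E] [SMul R E]
  [AddCommMonoid β] [PartialOrder β] [Module R β] [AddCommMonoid γ] [PartialOrder γ] [Module R γ]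

lemma convexOn_positiveLinearMap_comp (L : β →ₚ[R] γ) {s : Set E} {g : E → β}
    (hg : ConvexOn R s g) : ConvexOn R s fun x => L (g x) := by
  refine ⟨hg.1, fun x hx y hy a b ha hb hab => ?_⟩
  calc L (g (a • x + b • y)) ≤ L (a • g x + b • g y) :=
        OrderHomClass.mono L (hg.2 hx hy ha hb hab)
    _ = a • L (g x) + b • L (g y) := by rw [map_add, map_smul, map_smul]

end PositiveLinearMaps

lemma convexity_gap_mul_mul_conjTranspose {S A m n : Type*} [CommRing S] [StarRing S]
    [TrivialStar S] [Ring A] [StarRing A] [Algebra S A] [StarModule S A] [Fintype n]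
    (R : Matrix n n A) (Φ Ψ : Matrix m n A) {a b : S} (hab : a + b = 1) :
    a • (Φ * R * Φᴴ) + b • (Ψ * R * Ψᴴ) - (a • Φ + b • Ψ) * R * (a • Φ + b • Ψ)ᴴ =
      (a * b) • ((Φ - Ψ) * R * (Φ - Ψ)ᴴ) := by
  obtain rfl : b = 1 - a := eq_sub_of_add_eq' hab
  simp only [conjTranspose_add, conjTranspose_sub, conjTranspose_smul, star_trivial,
    Matrix.add_mul, Matrix.mul_add, Matrix.sub_mul, Matrix.mul_sub, Matrix.smul_mul,
    Matrix.mul_smul]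
  module

section LoewnerOrder

open scoped MatrixOrder

variable {𝕜 k m n : Type*} [RCLike 𝕜]

/-- Schur multiplication `X ↦ X ⊙ T` by a positive semidefinite matrix `T`, as a positive linear map
for the Loewner order. -/
noncomputable def schurMultiplier {T : Matrix m m 𝕜} (hT : T.PosSemidef) :
    Matrix m m 𝕜 →ₚ[ℝ] Matrix m m 𝕜 :=
  .mk₀
    { toFun := fun X => X ⊙ T
      map_add' := fun X Y => add_hadamard T X Y
      map_smul' := fun a X => smul_hadamard X T a }
    fun _ hX => (hX.posSemidef.hadamard hT).nonneg

/-- The output power `X ↦ Re tr(Λ X Λᴴ)` of the filter `Λ` on an input with correlation matrix `X`,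
as a positive linear map for the Loewner order. -/
noncomputable def filterOutputPower [Fintype k] [Fintype m] (Λ : Matrix k m 𝕜) :
    Matrix m m 𝕜 →ₚ[ℝ] ℝ :=
  .mk₀ (RCLike.reLm ∘ₗ traceLinearMap k ℝ 𝕜 ∘ₗ mulRightLinearMap k ℝ Λᴴ ∘ₗ mulLeftLinearMap m ℝ Λ)
    fun _ hX =>
      (RCLike.nonneg_iff.mp (hX.posSemidef.mul_mul_conjTranspose_same Λ).trace_nonneg).1

lemma filterOutputPower_apply [Fintype k] [Fintype m] (Λ : Matrix k m 𝕜) (X : Matrix m m 𝕜) :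
    filterOutputPower Λ X = RCLike.re (Λ * X * Λᴴ).trace :=
  rfl

lemma convexOn_mul_mul_conjTranspose [Finite m] [Fintype n] {R : Matrix n n 𝕜} (hR : R.PosSemidef) :
    ConvexOn ℝ Set.univ fun Φ : Matrix m n 𝕜 => Φ * R * Φᴴ := by
  refine ⟨convex_univ, fun Φ _ Ψ _ a b ha hb hab => ?_⟩
  rw [Matrix.le_iff, convexity_gap_mul_mul_conjTranspose R Φ Ψ hab]
  exact (hR.mul_mul_conjTranspose_same (Φ - Ψ)).smul (mul_nonneg ha hb)

theorem mse_convex_in_phase_matrix_general [Fintype m] [Fintype n] {Rc Rq : Matrix n n 𝕜}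
    {T : Matrix m m 𝕜} (hRc : Rc.PosSemidef) (hRq : Rq.PosSemidef) (hT : T.PosSemidef)
    (Λ : Matrix n m 𝕜) {c₁ : ℝ} (hc₁ : 0 ≤ c₁) :
    ConvexOn ℝ Set.univ fun Φ : Matrix m n 𝕜 =>
      RCLike.re (Λ * Φ * Rc * Φᴴ * Λᴴ).trace
        + c₁ * RCLike.re (Λ * ((Φ * Rq * Φᴴ) ⊙ T) * Λᴴ).trace
        - 2 * RCLike.re (Λ * Φ * Rc).trace := by
  have hsignal : ConvexOn ℝ Set.univ fun Φ : Matrix m n 𝕜 =>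
      RCLike.re (Λ * Φ * Rc * Φᴴ * Λᴴ).trace := by
    simpa only [filterOutputPower_apply, Matrix.mul_assoc] using
      convexOn_positiveLinearMap_comp (filterOutputPower Λ)
        (convexOn_mul_mul_conjTranspose (m := m) hRc)
  have hdistortion : ConvexOn ℝ Set.univ fun Φ : Matrix m n 𝕜 =>
      RCLike.re (Λ * ((Φ * Rq * Φᴴ) ⊙ T) * Λᴴ).trace :=
    convexOn_positiveLinearMap_comp ((filterOutputPower Λ).comp (schurMultiplier hT))
      (convexOn_mul_mul_conjTranspose hRq)
  have hcross : ConcaveOn ℝ Set.univ fun Φ : Matrix m n 𝕜 => RCLike.re (Λ * Φ * Rc).trace :=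
    (RCLike.reLm ∘ₗ traceLinearMap n ℝ 𝕜 ∘ₗ mulRightLinearMap n ℝ Rc ∘ₗ
      mulLeftLinearMap n ℝ Λ).concaveOn convex_univ
  exact (hsignal.add (hdistortion.smul hc₁)).sub (hcross.smul (zero_le_two (α := ℝ)))

end LoewnerOrder

/-- For fixed filter `Λ`, the channel-estimation MSE
`f(Φ) = Re tr(Λ Φ R_c Φᴴ Λᴴ) + c₁ Re tr(Λ ((Φ R_q Φᴴ) ⊙ I_τ) Λᴴ) − 2 Re tr(Λ Φ R_c)`
is a convex function of the RIS phase-shift matrix `Φ ∈ ℂ^{τ×M}` regarded over ℝ.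
(The filter `Λ` maps the `τ` received pilot samples to the `M`-dimensional channel,
so that all three traces are of square matrices.) -/
theorem mse_convex_in_phase_matrix {τ M : ℕ}
    {Rc Rq : Matrix (Fin M) (Fin M) ℂ}
    (hRc : Rc.PosSemidef) (hRq : Rq.PosSemidef)
    (Λ : Matrix (Fin M) (Fin τ) ℂ) {c₁ : ℝ} (hc₁ : 0 ≤ c₁)
    (f : Matrix (Fin τ) (Fin M) ℂ → ℝ)
    (hf : ∀ Φ : Matrix (Fin τ) (Fin M) ℂ,
      f Φ = ((Λ * Φ * Rc * Φᴴ * Λᴴ).trace).re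
        + c₁ * ((Λ * (Matrix.hadamard (Φ * Rq * Φᴴ) (1 : Matrix (Fin τ) (Fin τ) ℂ)) * Λᴴ).trace).re
        - 2 * ((Λ * Φ * Rc).trace).re) :
    ConvexOn ℝ Set.univ f := by
  rw [funext hf]
  exact mse_convex_in_phase_matrix_general hRc hRq .one Λ hc₁
end
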